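/- arXiv:2212.05029 — 2 statements merged into one kernel-verified Lean document; each statement's English description precedes it below -/
import Mathlib

section
/- The polynomial F(x) = x^9 + 289·x + 34 is irreducible over ℚ, and the number field K = ℚ(θ) for θ a root of F satisfies: 2 is a common index divisor of K, i.e., 2 divides (ℤ_K : ℤ[η]) for every algebraic integer η generating K. In particular K is not monogenic. -/
open Polynomial NumberField

lemma F_irr : Irreducible (X ^ 9 + C (289 : ℚ) * X + C (34 : ℚ)) := by
  have hdeg : (X ^ 9 + C (289 : ℤ) * X + C (34 : ℤ)).natDegree = 9 := by compute_degree!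
  have hm : (X ^ 9 + C (289 : ℤ) * X + C (34 : ℤ)).Monic := by monicity!
  have hE : (X ^ 9 + C (289 : ℤ) * X + C (34 : ℤ)).IsEisensteinAt (Ideal.span {17}) := by
    constructor
    · rw [hm.leadingCoeff, Ideal.mem_span_singleton]; norm_num
    · intro n hn
      rw [hdeg] at hn
      rw [Ideal.mem_span_singleton]
      interval_cases n <;> simp [coeff_X, coeff_X_pow]
    · rw [Ideal.span_singleton_pow, Ideal.mem_span_singleton]
      simp
  have hp : (Ideal.span {(17 : ℤ)}).IsPrime := by
    rw [Ideal.span_singleton_prime (by norm_num)]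
    norm_num
  have := hE.irreducible hp hm.isPrimitive (by omega)
  rw [hm.irreducible_iff_irreducible_map_fraction_map (K := ℚ)] at this
  simpa [Polynomial.map_ofNat, map_ofNat] using this

lemma homs {K : Type} [Field K] [NumberField K] (θ : K)
    (hθ : Polynomial.aeval θ (X ^ 9 + C (289 : ℚ) * X + C (34 : ℚ)) = 0)
    (htop : Algebra.adjoin ℚ {θ} = ⊤) (Y T : 𝓞 K) (hY : (Y : K) = θ + 1) (hT : T * Y = 128)
    {A L : Type} [CommRing A] [Field L] [CharZero L] (j : A →+* L)
    (hj : Function.Injective j) (hint : ∀ z : L, IsIntegral ℤ z → ∃ a, j a = z)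
    (ψ : A →+* ZMod 2) (y : A) (hy : (y - 1) ^ 9 + 289 * (y - 1) + 34 = 0) :
    ∃ (φ : 𝓞 K →+* ZMod 2) (t : A), t * y = 128 ∧ φ T = ψ t ∧ φ Y = ψ y := by
  have hm : (X ^ 9 + C (289 : ℚ) * X + C (34 : ℚ)).Monic := by monicity!
  have hmin := minpoly.eq_of_irreducible_of_monic F_irr hθ hm
  let pb := PowerBasis.ofAdjoinEqTop (Algebra.IsIntegral.isIntegral (R := ℚ) θ) htop
  have hgen : pb.gen = θ := PowerBasis.ofAdjoinEqTop_gen _ _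
  have hroot : aeval (j y - 1) (minpoly ℚ pb.gen) = 0 := by
    rw [hgen, ← hmin]
    have := congrArg j hy
    simpa [map_ofNat] using this
  let σ : K →ₐ[ℚ] L := pb.lift (j y - 1) hroot
  have hσ : σ θ = j y - 1 := (congrArg σ hgen.symm).trans (pb.lift_gen (j y - 1) hroot)
  have hr : ∀ x : 𝓞 K, ∃ a, j a = σ x := fun x =>
    hint _ ((RingOfIntegers.isIntegral_coe x).map (σ.restrictScalars ℤ))
  let e : A ≃+* j.range := RingEquiv.ofBijective j.rangeRestrict
    ⟨fun a b h => hj (congrArg Subtype.val h), j.rangeRestrict_surjective⟩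
  let τ : 𝓞 K →+* j.range :=
    ((σ : K →+* L).comp (algebraMap (𝓞 K) K)).codRestrict j.range (fun x => hr x)
  let ρ : 𝓞 K →+* A := (e.symm : j.range →+* A).comp τ
  have hρ : ∀ x, j (ρ x) = σ x := by
    intro x
    have : e (ρ x) = τ x := e.apply_symm_apply _
    exact congrArg Subtype.val this
  have hρY : ρ Y = y := by
    apply hj
    rw [hρ, hY, map_add, hσ]; simp
  refine ⟨ψ.comp ρ, ρ T, ?_, rfl, ?_⟩
  · rw [← hρY, ← map_mul, hT, map_ofNat]
  · simp [hρY]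

lemma final {R : Type} [CommRing R] (φ : Fin 3 → (R →+* ZMod 2))
    (hφ : Function.Injective φ) (η : R) :
    2 ∣ (Algebra.adjoin ℤ {η} : Subalgebra ℤ R).toSubring.toAddSubgroup.index := by
  by_contra h
  obtain ⟨a, b, hab, he⟩ := Fintype.exists_ne_map_eq_of_card_lt (fun i => φ i η) (by simp)
  apply hab
  apply hφ
  have h1 : ∀ x ∈ Algebra.adjoin ℤ {η}, φ a x = φ b x := by
    intro x hx
    induction hx using Algebra.adjoin_induction with
    | mem x hx => rw [Set.mem_singleton_iff] at hx; subst hx; exact he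
    | algebraMap r => simp
    | add x y _ _ h1 h2 => simp [h1, h2]
    | mul x y _ _ h1 h2 => simp [h1, h2]
  ext x
  have h2 := h1 _ (AddSubgroup.nsmul_index_mem
    (Algebra.adjoin ℤ {η} : Subalgebra ℤ R).toSubring.toAddSubgroup x)
  have h3 : (((Algebra.adjoin ℤ {η} : Subalgebra ℤ R).toSubring.toAddSubgroup.index : ℕ) : ZMod 2) = 1 := by
    rw [← Nat.cast_one, ZMod.natCast_eq_natCast_iff]
    exact Nat.odd_iff.mp (by rwa [← Nat.not_even_iff_odd, even_iff_two_dvd])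
  simpa [h3] using h2

lemma two_dvd_iff (x : ℤ_[2]) : 2 ∣ x ↔ PadicInt.toZMod x = 0 := by
  rw [← RingHom.mem_ker, PadicInt.ker_toZMod, PadicInt.maximalIdeal_eq_span_p, Ideal.mem_span_singleton]
  simp

lemma one_of_not (x : ZMod 2) (h : x ≠ 0) : x = 1 := by revert x; decide

lemma norm_le_iff (x : ℤ_[2]) (n : ℕ) : ‖x‖ ≤ (2:ℝ) ^ (-n : ℤ) ↔ 2 ^ n ∣ x := by
  have := PadicInt.norm_le_pow_iff_mem_span_pow x n
  rw [Ideal.mem_span_singleton] at this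
  simpa using this

lemma norm_two : ‖(2 : ℤ_[2])‖ = 1/2 := by
  have := PadicInt.norm_p (p := 2)
  simpa using this

lemma norm_odd (x : ℤ_[2]) (h : PadicInt.toZMod x = 1) : ‖x‖ = 1 := by
  by_contra h'
  have : x ∈ IsLocalRing.maximalIdeal ℤ_[2] := by
    rw [IsLocalRing.mem_maximalIdeal, mem_nonunits_iff, PadicInt.isUnit_iff]; exact h'
  rw [← PadicInt.ker_toZMod, RingHom.mem_ker, h] at this
  exact one_ne_zero this

noncomputable def G : ℤ[X] := (X - C 1) ^ 9 + C 289 * (X - C 1) + C 34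

lemma aeval_G {R : Type} [CommRing R] (y : R) :
    aeval y G = (y - 1) ^ 9 + 289 * (y - 1) + 34 := by
  simp [G, map_ofNat]

lemma aeval_G' {R : Type} [CommRing R] (y : R) :
    aeval y (derivative G) = 9 * (y - 1) ^ 8 + 289 := by
  simp [G, map_ofNat, derivative_pow]

lemma exists_gamma : ∃ γ : ℤ_[2], (γ - 1) ^ 9 + 289 * (γ - 1) + 34 = 0 ∧ PadicInt.toZMod γ = 1 := by
  have hd : ‖G.derivative.aeval (1 : ℤ_[2])‖ = 1 := by
    apply norm_odd
    rw [aeval_G']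
    simp [map_ofNat]; decide
  obtain ⟨z, hz, hz1, -⟩ := hensels_lemma (p := 2) (F := G) (a := (1 : ℤ_[2])) (by
    rw [hd]
    have h1 : G.aeval (1 : ℤ_[2]) = 2 * 17 := by rw [aeval_G]; norm_num
    rw [h1, norm_mul, norm_two, norm_odd 17 (by rw [map_ofNat]; decide)]; norm_num)
  rw [aeval_G] at hz
  refine ⟨z, hz, ?_⟩
  rw [hd, PadicInt.norm_lt_one_iff_dvd] at hz1
  have := (two_dvd_iff (z-1)).1 (by simpa using hz1)
  rw [map_sub, map_one] at this
  linear_combination this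

lemma exists_beta : ∃ β u : ℤ_[2], (β - 1) ^ 9 + 289 * (β - 1) + 34 = 0 ∧ PadicInt.toZMod β = 0 ∧
    β * u = 128 ∧ PadicInt.toZMod u = 1 := by
  have hd : ‖G.derivative.aeval (0 : ℤ_[2])‖ = 1/2 := by
    have h1 : G.derivative.aeval (0 : ℤ_[2]) = 2 * 149 := by rw [aeval_G']; norm_num
    rw [h1, norm_mul, norm_two, norm_odd 149 (by rw [map_ofNat]; decide)]; norm_num
  obtain ⟨z, hz, hz1, -⟩ := hensels_lemma (p := 2) (F := G) (a := (0 : ℤ_[2])) (by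
    rw [hd]
    have h1 : G.aeval (0 : ℤ_[2]) = - 2 ^ 8 := by rw [aeval_G]; norm_num
    rw [h1, norm_neg, norm_pow, norm_two]; norm_num)
  rw [aeval_G] at hz
  have h4 : (2:ℤ_[2]) ^ 2 ∣ z := by
    rw [← norm_le_iff]
    have := (PadicInt.norm_le_pow_iff_norm_lt_pow_add_one z (-2)).2 (by
      rw [hd] at hz1; norm_num at hz1 ⊢; exact hz1)
    simpa using this
  obtain ⟨c, rfl⟩ := h4
  have h2 : (PadicInt.toZMod (2 : ℤ_[2])) = 0 := by rw [map_ofNat]; decide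
  refine ⟨_, 149 + 2 * (-36 * c + 336 * c ^ 2 - 2016 * c ^ 3 + 8064 * c ^ 4 - 21504 * c ^ 5
    + 36864 * c ^ 6 - 36864 * c ^ 7 + 16384 * c ^ 8), hz, ?_, ?_, ?_⟩
  · rw [map_mul, map_pow, h2]; simp
  · have : (2 : ℤ_[2]) ≠ 0 := two_ne_zero
    apply mul_left_cancel₀ this
    linear_combination hz
  · rw [map_add, map_mul, h2, map_ofNat, zero_mul, add_zero]; decide

lemma exists_E (β γ u : ℤ_[2]) (hβ : (β - 1) ^ 9 + 289 * (β - 1) + 34 = 0)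
    (hγ : (γ - 1) ^ 9 + 289 * (γ - 1) + 34 = 0) (hβ0 : PadicInt.toZMod β = 0)
    (hγ1 : PadicInt.toZMod γ = 1) (hu : β * u = 128) (hu1 : PadicInt.toZMod u = 1) :
    ∃ E D : ℤ_[2][X], E.Monic ∧ E.natDegree = 7 ∧ E = X ^ 7 + C 2 * D ∧
      PadicInt.toZMod (D.coeff 0) = 1 ∧ E ∣ G.map (algebraMap ℤ ℤ_[2]) := by
  set H := G.map (algebraMap ℤ ℤ_[2]) with hH
  have hev : ∀ y, H.eval y = (y - 1) ^ 9 + 289 * (y - 1) + 34 := by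
    intro y; rw [← aeval_G, hH, eval_map_algebraMap]
  have hGm : G.Monic := by unfold G; monicity!
  have hGd : G.natDegree = 9 := by unfold G; compute_degree!
  have hHm : H.Monic := hGm.map _
  have hHd : H.natDegree = 9 := by rw [hH, hGm.natDegree_map, hGd]
  obtain ⟨H1, h1⟩ := dvd_iff_isRoot.2 (show H.IsRoot β by rw [IsRoot, hev, hβ])
  have hne : γ - β ≠ 0 := by
    intro h
    have := congrArg PadicInt.toZMod h
    simp [hβ0, hγ1] at this
  have h2 : H1.IsRoot γ := by
    have h := hev γ
    rw [hγ, h1, eval_mul] at h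
    simpa [hne] using h
  obtain ⟨E, h3⟩ := dvd_iff_isRoot.2 h2
  have hfac : H = (X - C β) * (X - C γ) * E := by rw [h1, h3, mul_assoc]
  have hq : ((X - C β) * (X - C γ)).Monic := (monic_X_sub_C _).mul (monic_X_sub_C _)
  have hE : E.Monic := hq.of_mul_monic_left (hfac ▸ hHm)
  have hEd : E.natDegree = 7 := by
    have := hq.natDegree_mul hE
    rw [← hfac, hHd, (monic_X_sub_C _).natDegree_mul (monic_X_sub_C _)] at this
    simp at this
    omega
  have hmod : E.map PadicInt.toZMod = X ^ 7 := by
    have h := congrArg (Polynomial.map (PadicInt.toZMod (p := 2))) hfac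
    have h5 : H.map (PadicInt.toZMod (p := 2)) = X ^ 8 * (X - 1) := by
      rw [hH, Polynomial.map_map]
      have h2 : (2 : (ZMod 2)[X]) = 0 := CharTwo.two_eq_zero
      simp only [G, Polynomial.map_add, Polynomial.map_mul, Polynomial.map_pow, Polynomial.map_sub, map_X, map_ofNat, map_one, Polynomial.map_one, Polynomial.map_ofNat]
      linear_combination (-4*X^8 + 18*X^7-42*X^6+63*X^5-63*X^4+42*X^3-18*X^2+149*X-128) * h2
    rw [h5] at h
    simp only [Polynomial.map_mul, Polynomial.map_sub, map_X, map_C, hβ0, hγ1, map_zero, map_one, sub_zero] at h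
    have hx : (X : (ZMod 2)[X]) * (X - 1) ≠ 0 := mul_ne_zero X_ne_zero (by simpa using X_sub_C_ne_zero (1 : ZMod 2))
    apply mul_left_cancel₀ hx
    linear_combination -h
  have hdvd : C 2 ∣ E - X ^ 7 := by
    rw [C_dvd_iff_dvd_coeff]
    intro i
    rw [two_dvd_iff, ← coeff_map]
    simp [hmod]
  obtain ⟨D, hD⟩ := hdvd
  have hD' : E = X ^ 7 + C 2 * D := by linear_combination hD
  refine ⟨E, D, hE, hEd, hD', ?_, ⟨_, hfac.trans (mul_comm _ _)⟩⟩
  have h0 := congrArg (Polynomial.eval 0) hfac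
  rw [hev, hD'] at h0
  simp [← coeff_zero_eq_eval_zero] at h0
  have h6 : γ * D.coeff 0 = - u := by
    have : (256 : ℤ_[2]) ≠ 0 := by norm_num
    apply mul_left_cancel₀ this
    linear_combination (-u) * h0 - 2 * γ * D.coeff 0 * hu
  have := congrArg PadicInt.toZMod h6
  simp [hγ1, hu1] at this
  rw [this]

lemma third {K : Type} [Field K] [NumberField K] (θ : K)
    (hθ : Polynomial.aeval θ (X ^ 9 + C (289 : ℚ) * X + C (34 : ℚ)) = 0)
    (htop : Algebra.adjoin ℚ {θ} = ⊤) (Y T : 𝓞 K) (hY : (Y : K) = θ + 1) (hT : T * Y = 128)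
    (E D : ℤ_[2][X]) (hE : E.Monic) (hEd : E.natDegree = 7) (hED : E = X ^ 7 + C 2 * D)
    (hD : PadicInt.toZMod (D.coeff 0) = 1) (hEG : E ∣ G.map (algebraMap ℤ ℤ_[2])) :
    ∃ φ : 𝓞 K →+* ZMod 2, φ T = 0 ∧ φ Y = 0 := by
  have hp2 : Prime (2 : ℤ_[2]) := by simpa using PadicInt.prime_p (p := 2)
  have heis : E.IsEisensteinAt (Ideal.span {2}) := by
    constructor
    · rw [hE.leadingCoeff, Ideal.mem_span_singleton]
      exact hp2.not_dvd_one
    · intro n hn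
      rw [hEd] at hn
      rw [Ideal.mem_span_singleton, hED, coeff_add, coeff_X_pow, if_neg hn.ne, zero_add, coeff_C_mul]
      exact dvd_mul_right _ _
    · rw [Ideal.span_singleton_pow, Ideal.mem_span_singleton, hED, coeff_add, coeff_X_pow,
        if_neg (by norm_num), zero_add, coeff_C_mul, pow_two, mul_dvd_mul_iff_left two_ne_zero,
        two_dvd_iff, hD]
      exact one_ne_zero
  have hirr : Irreducible E := heis.irreducible ((Ideal.span_singleton_prime two_ne_zero).2 hp2)
    hE.isPrimitive (by omega)
  set E' := E.map (algebraMap ℤ_[2] ℚ_[2]) with hE'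
  have hirr' : Irreducible E' := (hE.irreducible_iff_irreducible_map_fraction_map (K := ℚ_[2])).1 hirr
  have : Fact (Irreducible E') := ⟨hirr'⟩
  let L := AdjoinRoot E'
  have : CharZero L := charZero_of_injective_algebraMap (algebraMap ℚ_[2] L).injective
  let B := AdjoinRoot.powerBasis (K := ℚ_[2]) hirr'.ne_zero
  have hBg : B.gen = AdjoinRoot.root E' := AdjoinRoot.powerBasis_gen _
  have hroot : aeval B.gen E = 0 := by
    rw [hBg, ← aeval_map_algebraMap ℚ_[2], AdjoinRoot.aeval_eq, AdjoinRoot.mk_self]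
  have hBint : IsIntegral ℤ_[2] B.gen := ⟨E, hE, hroot⟩
  have hmin : minpoly ℤ_[2] B.gen = E := by
    apply Polynomial.map_injective _ (IsFractionRing.injective ℤ_[2] ℚ_[2])
    rw [← minpoly.isIntegrallyClosed_eq_field_fractions' ℚ_[2] hBint]
    symm
    apply minpoly.eq_of_irreducible_of_monic hirr' _ (hE.map _)
    rw [aeval_map_algebraMap, hroot]
  have htf : Module.IsTorsionFree ℤ_[2] (AdjoinRoot E') := Module.IsTorsionFree.trans_faithfulSMul ℤ_[2] ℚ_[2] _
  let S := Algebra.adjoin ℤ_[2] {B.gen}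
  let e := minpoly.equivAdjoin hBint
  let ψ₀ : AdjoinRoot (minpoly ℤ_[2] B.gen) →+* ZMod 2 :=
    AdjoinRoot.lift PadicInt.toZMod 0 (by
      rw [hmin, hED]
      have : (PadicInt.toZMod (2 : ℤ_[2])) = 0 := by rw [map_ofNat]; decide
      simp [this])
  let ψ : S →+* ZMod 2 := ψ₀.comp (e.symm : S ≃+* _).toRingHom
  let y : S := ⟨B.gen, Algebra.self_mem_adjoin_singleton _ _⟩
  have hey : e (AdjoinRoot.root _) = y := by
    apply Subtype.ext
    simp [e, y]
  have hψy : ψ y = 0 := by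
    have : e.symm y = AdjoinRoot.root _ := by rw [← hey, e.symm_apply_apply]
    change ψ₀ (e.symm y) = 0
    rw [this]; exact AdjoinRoot.lift_root _
  have hψc : ∀ c : ℤ_[2], ψ (algebraMap _ _ c) = PadicInt.toZMod c := by
    intro c
    change ψ₀ (e.symm (algebraMap _ _ c)) = _
    rw [AlgEquiv.commutes]; exact AdjoinRoot.lift_of _
  have hyE : aeval y E = 0 := by
    apply Subtype.ext
    rw [Polynomial.aeval_subalgebra_coe]; exact hroot
  have hyG : (y - 1) ^ 9 + 289 * (y - 1) + 34 = 0 := by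
    obtain ⟨Q, hQ⟩ := hEG
    rw [← aeval_G, ← aeval_map_algebraMap ℤ_[2], hQ, map_mul, hyE, zero_mul]
  obtain ⟨φ, t, ht, h1, h2⟩ := homs θ hθ htop Y T hY hT (A := S) (L := L) (S.val : S →+* L)
    Subtype.val_injective (by
      intro z hz
      have hz' : IsIntegral ℤ_[2] z := hz.tower_top
      suffices z ∈ S from ⟨⟨z, this⟩, rfl⟩
      obtain ⟨n, hn⟩ : ∃ n : ℕ, (2 : ℤ_[2]) ^ n • z ∈ S := by
        obtain ⟨q, rfl⟩ := AdjoinRoot.mk_surjective z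
        obtain ⟨b, hb, hbq⟩ := IsLocalization.integerNormalization_spec (nonZeroDivisors ℤ_[2]) q
        have hb0 : b ≠ 0 := nonZeroDivisors.ne_zero hb
        have hbz : b • (AdjoinRoot.mk E' q) ∈ S := by
          have h := congrArg (aeval B.gen) hbq
          rw [aeval_map_algebraMap, ← IsScalarTower.algebraMap_smul ℚ_[2] b q, map_smul, hBg,
            AdjoinRoot.aeval_eq (f := E') q, IsScalarTower.algebraMap_smul] at h
          rw [← h, ← hBg]
          exact aeval_mem_adjoin_singleton _ _
        refine ⟨b.valuation, ?_⟩
        have h2 : (2 : ℤ_[2]) ^ b.valuation = ((PadicInt.unitCoeff hb0)⁻¹ : ℤ_[2]ˣ) * b := by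
          rw [Units.eq_inv_mul_iff_mul_eq]
          have := PadicInt.unitCoeff_spec hb0
          exact this.symm
        rw [h2, mul_smul]
        exact S.smul_mem hbz _
      exact mem_adjoin_of_smul_prime_pow_smul_of_minpoly_isEisensteinAt hp2 hBint hz' hn
        (by rw [hmin]; exact heis)) ψ y hyG
  refine ⟨φ, ?_, h2.trans hψy⟩
  rw [h1]
  have h3 : t * aeval y D = -64 * y ^ 6 := by
    have h2 : (2 : S) ≠ 0 := by
      intro h
      have := congrArg Subtype.val h
      exact two_ne_zero (α := L) this
    apply mul_left_cancel₀ h2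
    rw [hED] at hyE
    simp [map_ofNat] at hyE
    linear_combination t * hyE - y ^ 6 * ht
  have h4 := congrArg ψ h3
  have h5 : ψ (aeval y D) = 1 := by
    rw [aeval_def, hom_eval₂, hψy, ← hD]
    have : ψ.comp (algebraMap ℤ_[2] S) = PadicInt.toZMod := RingHom.ext hψc
    rw [this]
    simp
  rw [map_mul, h5, map_mul, map_pow, hψy] at h4
  simpa using h4

theorem example_289_34_common_index_divisor :
    Irreducible (X ^ 9 + C (289 : ℚ) * X + C (34 : ℚ)) ∧
    ∀ (K : Type) [Field K] [NumberField K] (θ : K),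
      Polynomial.aeval θ (X ^ 9 + C (289 : ℚ) * X + C (34 : ℚ)) = 0 →
      Algebra.adjoin ℚ {θ} = ⊤ →
      ((∀ η : 𝓞 K, Algebra.adjoin ℚ {(η : K)} = ⊤ →
          2 ∣ (Algebra.adjoin ℤ {η} : Subalgebra ℤ (𝓞 K)).toSubring.toAddSubgroup.index) ∧
        ¬ ∃ η : 𝓞 K, Algebra.adjoin ℤ {η} = ⊤) := by
  refine ⟨F_irr, ?_⟩
  intro K _ _ θ hθ htop
  have hθ' : θ ^ 9 + 289 * θ + 34 = 0 := by simpa [map_ofNat] using hθ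
  have hθint : IsIntegral ℤ (θ + 1) := by
    refine ⟨G, by unfold G; monicity!, ?_⟩
    rw [← aeval_def, aeval_G]
    linear_combination hθ'
  have hne : θ + 1 ≠ 0 := by
    intro h
    have : θ = -1 := by linear_combination h
    rw [this] at hθ'
    norm_num at hθ'
  have hTint : IsIntegral ℤ (128 / (θ + 1)) := by
    refine ⟨X ^ 9 - C 149 * X ^ 8 + C (18 * 128) * X ^ 7 - C (42 * 128 ^ 2) * X ^ 6
      + C (63 * 128 ^ 3) * X ^ 5 - C (63 * 128 ^ 4) * X ^ 4 + C (42 * 128 ^ 5) * X ^ 3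
      - C (18 * 128 ^ 6) * X ^ 2 + C (9 * 2 ^ 6 * 128 ^ 6) * X - C (2 ^ 6 * 128 ^ 7), by monicity!, ?_⟩
    rw [← aeval_def]
    simp [map_ofNat]
    field_simp
    linear_combination (-36028797018963968) * hθ'
  let Y : 𝓞 K := ⟨θ + 1, hθint⟩
  let T : 𝓞 K := ⟨128 / (θ + 1), hTint⟩
  have hT : T * Y = 128 := by
    apply RingOfIntegers.ext
    change 128 / (θ + 1) * (θ + 1) = algebraMap (𝓞 K) K 128
    rw [map_ofNat]
    field_simp
  have hint : ∀ z : ℚ_[2], IsIntegral ℤ z → ∃ a : ℤ_[2], algebraMap ℤ_[2] ℚ_[2] a = z := by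
    intro z hz
    exact IsIntegrallyClosed.isIntegral_iff.1 (hz.tower_top (A := ℤ_[2]))
  obtain ⟨γ, hγ, hγ1⟩ := exists_gamma
  obtain ⟨β, u, hβ, hβ0, hu, hu1⟩ := exists_beta
  obtain ⟨E, D, hE, hEd, hED, hD, hEG⟩ := exists_E β γ u hβ hγ hβ0 hγ1 hu hu1
  obtain ⟨φ₁, t₁, -, -, h1⟩ := homs θ hθ htop Y T rfl hT (algebraMap ℤ_[2] ℚ_[2])
    (IsFractionRing.injective _ _) hint PadicInt.toZMod γ hγ
  obtain ⟨φ₂, t₂, ht, h2, h2'⟩ := homs θ hθ htop Y T rfl hT (algebraMap ℤ_[2] ℚ_[2])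
    (IsFractionRing.injective _ _) hint PadicInt.toZMod β hβ
  obtain ⟨φ₃, h3, h3'⟩ := third θ hθ htop Y T rfl hT E D hE hEd hED hD hEG
  have hβne : β ≠ 0 := by
    rintro rfl
    norm_num at hu
  have htu : t₂ = u := mul_right_cancel₀ hβne (by rw [ht, ← hu, mul_comm])
  rw [hγ1] at h1
  rw [hβ0] at h2'
  rw [htu, hu1] at h2
  have n12 : φ₁ ≠ φ₂ := by rintro rfl; rw [h1] at h2'; exact one_ne_zero h2'
  have n13 : φ₁ ≠ φ₃ := by rintro rfl; rw [h1] at h3'; exact one_ne_zero h3'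
  have n23 : φ₂ ≠ φ₃ := by rintro rfl; rw [h2] at h3; exact one_ne_zero h3
  have hinj : Function.Injective ![φ₁, φ₂, φ₃] := by
    intro a b
    fin_cases a <;> fin_cases b <;> simp [n12, n13, n23, n12.symm, n13.symm, n23.symm]
  have key := final ![φ₁, φ₂, φ₃] hinj
  refine ⟨fun η _ => key η, ?_⟩
  rintro ⟨η, hη⟩
  have := key η
  rw [hη] at this
  have h1 : (⊤ : Subalgebra ℤ (𝓞 K)).toSubring.toAddSubgroup = ⊤ := by
    ext; simp
  rw [h1, AddSubgroup.index_top] at this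
  norm_num at this
end

section
/- Let p be a rational prime dividing the index i(K) of a number field K of degree 9 defined by x^9 + ax + b with ab ≠ 0. Then p ∈ {2, 3}. -/
open Polynomial NumberField

section


structure PrimeData (O : Type*) [CommRing O] [IsDedekindDomain O] [Module.Free ℤ O]
    [Module.Finite ℤ O] (p : ℕ) where
  S : Finset (Ideal O)
  e : Ideal O → ℕ
  f : Ideal O → ℕ
  max : ∀ P ∈ S, P.IsMaximal
  bot : ∀ P ∈ S, P ≠ ⊥
  e_pos : ∀ P ∈ S, 1 ≤ e P
  f_pos : ∀ P ∈ S, 1 ≤ f P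
  norm : ∀ P ∈ S, Ideal.absNorm P = p ^ f P
  prod : ∏ P ∈ S, P ^ e P = Ideal.span {(p : O)}
  sum : ∑ P ∈ S, e P * f P = Module.finrank ℤ O
  mem : ∀ P ∈ S, (p : O) ∈ P
  mem_pow : ∀ P ∈ S, ∀ k, (p : O) ∈ P ^ k ↔ k ≤ e P

variable {O : Type*} [CommRing O] [IsDedekindDomain O] [Module.Free ℤ O] [Module.Finite ℤ O]

theorem exists_primeData [CharZero O] (p : ℕ) (hp : p.Prime) : Nonempty (PrimeData O p) := by
  classical
  have hI : Ideal.span {(p : O)} ≠ ⊥ := by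
    simp [hp.ne_zero]
  set I := Ideal.span {(p : O)} with hIdef
  set N := UniqueFactorizationMonoid.normalizedFactors I with hN
  have hprime : ∀ P ∈ N.toFinset, Prime P := fun P hP =>
    UniqueFactorizationMonoid.prime_of_normalized_factor P (Multiset.mem_toFinset.mp hP)
  have hbot : ∀ P ∈ N.toFinset, P ≠ ⊥ := fun P hP => (hprime P hP).ne_zero
  have hmax : ∀ P ∈ N.toFinset, P.IsMaximal := fun P hP =>
    (Ideal.isPrime_of_prime (hprime P hP)).isMaximal (hbot P hP)
  have hprod : ∏ P ∈ N.toFinset, P ^ N.count P = I := by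
    rw [← Finset.prod_multiset_count]
    exact Ideal.prod_normalizedFactors_eq_self hI
  have hmem : ∀ P ∈ N.toFinset, (p : O) ∈ P := fun P hP => by
    have := UniqueFactorizationMonoid.dvd_of_mem_normalizedFactors (Multiset.mem_toFinset.mp hP)
    exact Ideal.dvd_iff_le.mp this (Ideal.mem_span_singleton_self _)
  have hnorm : ∀ P : Ideal O, ∃ f : ℕ, P ∈ N.toFinset → 1 ≤ f ∧ Ideal.absNorm P = p ^ f := by
    intro P
    by_cases hP : P ∈ N.toFinset
    · have h1 := Ideal.absNorm_dvd_absNorm_of_le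
        ((Ideal.span_singleton_le_iff_mem _).mpr (hmem P hP))
      rw [Ideal.absNorm_span_natCast] at h1
      obtain ⟨f, -, hf⟩ := (Nat.dvd_prime_pow hp).mp h1
      refine ⟨f, fun _ => ⟨?_, hf⟩⟩
      by_contra hc
      have : f = 0 := by omega
      rw [this, pow_zero, Ideal.absNorm_eq_one_iff] at hf
      exact (hmax P hP).ne_top hf
    · exact ⟨0, fun h => absurd h hP⟩
  choose f hf using hnorm
  refine ⟨⟨N.toFinset, fun P => N.count P, f, hmax, hbot, ?_, fun P hP => (hf P hP).1,
    fun P hP => (hf P hP).2, hprod, ?_, hmem, ?_⟩⟩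
  · intro P hP
    exact Multiset.one_le_count_iff_mem.mpr (Multiset.mem_toFinset.mp hP)
  · have h := congrArg Ideal.absNorm hprod
    rw [map_prod, hIdef, Ideal.absNorm_span_natCast] at h
    rw [Finset.prod_congr rfl (g := fun P => p ^ (N.count P * f P)) (fun P hP => by
      rw [map_pow, (hf P hP).2, ← pow_mul, mul_comm]), Finset.prod_pow_eq_pow_sum] at h
    exact Nat.pow_right_injective hp.two_le h
  · intro P hP k
    rw [← Ideal.span_singleton_le_iff_mem, ← Ideal.dvd_iff_le, pow_dvd_iff_le_emultiplicity,
      UniqueFactorizationMonoid.emultiplicity_eq_count_normalizedFactors (hprime P hP).irreducible hI]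
    simp [hN, hIdef]

theorem pow_notMem (P : Ideal O) (hP : P.IsMaximal) (hb : P ≠ ⊥) (x : O) (hx : x ∉ P ^ 2) (k : ℕ) :
    x ^ k ∉ P ^ (k + 1) := by
  have hpr : Prime P := Ideal.prime_of_isPrime hb hP.isPrime
  have key : ∀ (y : O) (j : ℕ), y ∈ P ^ j ↔ (j : ℕ∞) ≤ emultiplicity P (Ideal.span {y}) := by
    intro y j
    rw [← Ideal.span_singleton_le_iff_mem, ← Ideal.dvd_iff_le, pow_dvd_iff_le_emultiplicity]
  rw [key] at hx ⊢
  rw [← Ideal.span_singleton_pow, emultiplicity_pow hpr]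
  push Not at hx ⊢
  have : emultiplicity P (Ideal.span {x}) ≤ 1 := by
    apply Order.le_of_lt_add_one
    simpa [one_add_one_eq_two] using hx
  calc _ ≤ (k : ℕ∞) * 1 := by gcongr
    _ < _ := by rw [mul_one]; exact_mod_cast Nat.lt_succ_self k

theorem exists_irred (p d : ℕ) [Fact p.Prime] (hd : 1 ≤ d) :
    ∃ g : (ZMod p)[X], g.Monic ∧ Irreducible g ∧ g.natDegree = d := by
  obtain ⟨α, hα⟩ := Field.exists_primitive_element (ZMod p) (GaloisField p d)
  have hi : IsIntegral (ZMod p) α := Algebra.IsIntegral.isIntegral α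
  refine ⟨minpoly (ZMod p) α, minpoly.monic hi, minpoly.irreducible hi, ?_⟩
  rw [← IntermediateField.adjoin.finrank hi, hα, IntermediateField.finrank_top',
    GaloisField.finrank p (by omega)]

/-- lifts of residue roots -/
theorem exists_root (p d : ℕ) [Fact p.Prime] (P : Ideal O) (hP : P.IsMaximal)
    (hb : P ≠ ⊥) (hpP : (p : O) ∈ P) (hd : 1 ≤ d) (hn : Ideal.absNorm P = p ^ d) (G : ℤ[X])
    (hG : Irreducible (G.map (Int.castRingHom (ZMod p))))
    (hGd : (G.map (Int.castRingHom (ZMod p))).natDegree = d) :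
    ∃ x : O, aeval x G ∈ P ∧ aeval x G ∉ P ^ 2 ∧ ∀ H : ℤ[X], aeval x H ∈ P →
      G.map (Int.castRingHom (ZMod p)) ∣ H.map (Int.castRingHom (ZMod p)) := by
  classical
  let _ : Field (O ⧸ P) := Ideal.Quotient.field P
  have hfin : Finite (O ⧸ P) := by
    rw [← Ideal.absNorm_ne_zero_iff, hn]
    exact pow_ne_zero _ (Fact.out : p.Prime).ne_zero
  have hchar : CharP (O ⧸ P) p := by
    have h0 : ((p : ℕ) : O ⧸ P) = 0 := by
      have := Ideal.Quotient.eq_zero_iff_mem.mpr hpP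
      simpa using this
    exact (CharP.charP_iff_prime_eq_zero (Fact.out)).mpr h0
  let _ : Algebra (ZMod p) (O ⧸ P) := ZMod.algebra _ p
  set g := G.map (Int.castRingHom (ZMod p)) with hg
  have hcard : Nat.card (O ⧸ P) = p ^ d := hn
  have hfr : Module.finrank (ZMod p) (O ⧸ P) = d := by
    have := FiniteField.pow_finrank_eq_natCard p (O ⧸ P)
    rw [hcard] at this
    exact Nat.pow_right_injective (Fact.out : p.Prime).two_le this
  obtain ⟨z, hz⟩ : ∃ z : O ⧸ P, aeval z g = 0 := by
    have : Fact (Irreducible g) := ⟨hG⟩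
    have hfa : Module.finrank (ZMod p) (AdjoinRoot g) = d := by
      rw [(AdjoinRoot.powerBasis hG.ne_zero).finrank, AdjoinRoot.powerBasis_dim, hGd]
    have : Module.Finite (ZMod p) (AdjoinRoot g) := (AdjoinRoot.powerBasis hG.ne_zero).finite
    have : Finite (AdjoinRoot g) := Module.finite_of_finite (ZMod p)
    have hca := FiniteField.pow_finrank_eq_natCard p (AdjoinRoot g)
    have _ := Fintype.ofFinite (AdjoinRoot g)
    have _ := Fintype.ofFinite (O ⧸ P)
    let E := FiniteField.algEquivOfCardEq (K := AdjoinRoot g) (K' := O ⧸ P) p (by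
      rw [Fintype.card_eq_nat_card, Fintype.card_eq_nat_card, hcard, ← hca, hfa])
    refine ⟨E (AdjoinRoot.root g), ?_⟩
    have h1 : aeval (AdjoinRoot.root g) g = 0 := by simp
    rw [aeval_algHom_apply, h1, map_zero]
  have haev : ∀ (x : O) (H : ℤ[X]), Ideal.Quotient.mk P (aeval x H) =
      aeval (Ideal.Quotient.mk P x) (H.map (Int.castRingHom (ZMod p))) := by
    intro x H
    rw [aeval_def, aeval_def, eval₂_map, hom_eval₂]
    congr 1
    exact RingHom.ext_int _ _
  have hdvd : ∀ (x : O) (H : ℤ[X]), Ideal.Quotient.mk P x = z → (aeval x H ∈ P ↔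
      g ∣ H.map (Int.castRingHom (ZMod p))) := by
    intro x H hx
    rw [← Ideal.Quotient.eq_zero_iff_mem, haev, hx]
    constructor
    · intro h
      have h1 := minpoly.dvd (ZMod p) z h
      have h2 := minpoly.dvd (ZMod p) z hz
      have hi : IsIntegral (ZMod p) z := Algebra.IsIntegral.isIntegral z
      have h3 := (minpoly.irreducible hi).associated_of_dvd hG h2
      exact (h3.symm.dvd).trans h1
    · rintro ⟨q, hq⟩
      rw [hq, map_mul, hz, zero_mul]
  obtain ⟨x, hx⟩ := Ideal.Quotient.mk_surjective z
  have hder : aeval x (derivative G) ∉ P := by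
    rw [hdvd x _ hx, ← derivative_map, ← hg]
    intro h
    have hs : g.Separable := PerfectField.separable_of_irreducible hG
    exact hG.not_isUnit (hs.isUnit_of_dvd' dvd_rfl h)
  by_cases h2 : aeval x G ∈ P ^ 2
  · obtain ⟨π, hπ, hπ2⟩ : ∃ π ∈ P, π ∉ P ^ 2 := by
      have hlt := Ideal.pow_succ_lt_pow (P := P) hb 1
      rw [pow_one] at hlt
      exact SetLike.exists_of_lt hlt
    have hxπ : Ideal.Quotient.mk P (x + π) = z := by
      rw [map_add, hx, Ideal.Quotient.eq_zero_iff_mem.mpr hπ, add_zero]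
    refine ⟨x + π, (hdvd _ _ hxπ).mpr dvd_rfl, ?_, fun H => (hdvd _ H hxπ).mp⟩
    intro hc
    apply hder
    have hq : Ideal.Quotient.mk (P ^ 2) π ^ 2 = 0 := by
      rw [← map_pow]; exact Ideal.Quotient.eq_zero_iff_mem.mpr (Ideal.pow_mem_pow hπ 2)
    have h3 := Polynomial.aeval_add_of_sq_eq_zero G (Ideal.Quotient.mk (P ^ 2) x) (Ideal.Quotient.mk (P ^ 2) π) hq
    have haev2 : ∀ (x : O) (H : ℤ[X]), aeval (Ideal.Quotient.mk (P ^ 2) x) H = Ideal.Quotient.mk (P ^ 2) (aeval x H) := by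
      intro x H
      rw [aeval_def, aeval_def, hom_eval₂]
      congr 1
    rw [← map_add, haev2, haev2, haev2, Ideal.Quotient.eq_zero_iff_mem.mpr hc,
      Ideal.Quotient.eq_zero_iff_mem.mpr h2, zero_add, ← map_mul, eq_comm, Ideal.Quotient.eq_zero_iff_mem] at h3
    have := hP.isPrime
    rw [mul_comm] at h3
    exact Ideal.mem_prime_of_mul_mem_pow hb hπ2 h3
  · exact ⟨x, (hdvd x G hx).mpr dvd_rfl, h2, fun H => (hdvd x H hx).mp⟩

end

section

variable {O : Type*} [CommRing O] [IsDedekindDomain O] [Module.Free ℤ O] [Module.Finite ℤ O]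

theorem taylor_inj_of_lt (p : ℕ) [Fact p.Prime] (g : (ZMod p)[X]) (h1 : 1 ≤ g.natDegree)
    (hlt : g.natDegree < p) (c c' : ZMod p) (h : taylor c g = taylor c' g) : c = c' := by
  by_contra hne
  have ht : c - c' ≠ 0 := sub_ne_zero.mpr hne
  have h2 : ∀ x, g.eval (x + (c - c')) = g.eval x := by
    intro x
    have := congrArg (eval (x - c')) h
    rw [taylor_eval, taylor_eval] at this
    rwa [show x - c' + c = x + (c - c') by ring, sub_add_cancel] at this
  have h3 : ∀ k : ℕ, g.eval ((k : ZMod p) * (c - c')) = g.eval 0 := by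
    intro k
    induction k with
    | zero => simp
    | succ k ih => rw [← ih, ← h2 (k * (c - c'))]; congr 1; push_cast; ring
  have h4 : ∀ y, g.eval y = g.eval 0 := by
    intro y
    have := h3 (y / (c - c')).val
    rwa [ZMod.natCast_zmod_val, div_mul_cancel₀ _ ht] at this
  have h5 : g - C (g.eval 0) = 0 := by
    apply eq_zero_of_natDegree_lt_card_of_eval_eq_zero' _ (Finset.univ)
    · intro i _
      simp [h4 i]
    · rw [natDegree_sub_C, Finset.card_univ, ZMod.card]
      exact hlt
  rw [sub_eq_zero] at h5
  rw [h5, natDegree_C] at h1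
  omega

theorem lift_dvd (p : ℕ) [Fact p.Prime] (G H : ℤ[X])
    (h : G.map (Int.castRingHom (ZMod p)) ∣ H.map (Int.castRingHom (ZMod p))) :
    ∃ M N : ℤ[X], H = G * M + C (p : ℤ) * N := by
  obtain ⟨q, hq⟩ := h
  obtain ⟨M, rfl⟩ := map_surjective (Int.castRingHom (ZMod p)) (ZMod.ringHom_surjective _) q
  have : C (p : ℤ) ∣ H - G * M := by
    rw [C_dvd_iff_dvd_coeff]
    intro i
    have h1 : (H - G * M).map (Int.castRingHom (ZMod p)) = 0 := by
      rw [Polynomial.map_sub, Polynomial.map_mul, hq, sub_self]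
    have h2 := congrArg (fun q => coeff q i) h1
    simp only [coeff_map, coeff_zero, eq_intCast] at h2
    exact (ZMod.intCast_zmod_eq_zero_iff_dvd _ _).mp h2
  obtain ⟨N, hN⟩ := this
  exact ⟨M, N, by rw [← hN]; ring⟩

theorem pow_dvd_of_mem (p : ℕ) [Fact p.Prime] (P : Ideal O) (hP : P.IsMaximal)
    (hb : P ≠ ⊥) (G : ℤ[X]) (η : O) (e : ℕ) (hpe : (p : O) ∈ P ^ e)
    (h2 : aeval η G ∉ P ^ 2)
    (hH : ∀ H : ℤ[X], aeval η H ∈ P →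
      G.map (Int.castRingHom (ZMod p)) ∣ H.map (Int.castRingHom (ZMod p)))
    (H : ℤ[X]) (k : ℕ) (hk : k ≤ e) (hm : aeval η H ∈ P ^ k) :
    (G.map (Int.castRingHom (ZMod p))) ^ k ∣ H.map (Int.castRingHom (ZMod p)) := by
  induction k with
  | zero => simp
  | succ k ih =>
    have h3 := ih (by omega) (Ideal.pow_le_pow_right (by omega) hm)
    rw [← Polynomial.map_pow] at h3
    obtain ⟨M, N, hMN⟩ := lift_dvd p _ _ h3
    have h4 : aeval η G ^ k * aeval η M ∈ P ^ (k + 1) := by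
      have h5 : aeval η G ^ k * aeval η M = aeval η H - (p : O) * aeval η N := by
        rw [hMN]; simp
      rw [h5]
      exact Ideal.sub_mem _ hm (Ideal.mul_mem_right _ _ (Ideal.pow_le_pow_right hk hpe))
    have := hP.isPrime
    have h6 := Ideal.mem_prime_of_mul_mem_pow hb (pow_notMem P hP hb _ h2 k) h4
    have h7 := hH _ h6
    rw [hMN, pow_succ]
    simp only [Polynomial.map_add, Polynomial.map_mul, Polynomial.map_pow, map_C]
    have : (Int.castRingHom (ZMod p)) (p : ℤ) = 0 := by simp
    rw [this, C_0, zero_mul, add_zero]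
    exact mul_dvd_mul_left _ h7

theorem exists_eta (p : ℕ) [Fact p.Prime] (D : PrimeData O p)
    (hcard : ∀ d, (D.S.filter (fun P => D.f P = d)).card ≤ p)
    (hdist : ∀ P ∈ D.S, ∀ Q ∈ D.S, P ≠ Q → D.f P = D.f Q → D.f P < p) :
    ∃ η : O, ∀ x : O, ∃ H : ℤ[X], x - aeval η H ∈ Ideal.span {(p : O)} := by
  classical
  have hpp : p.Prime := Fact.out
  have hirr : ∀ d : ℕ, ∃ g : (ZMod p)[X], 1 ≤ d → g.Monic ∧ Irreducible g ∧ g.natDegree = d := by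
    intro d
    by_cases hd : 1 ≤ d
    · obtain ⟨g, hg⟩ := exists_irred p d hd
      exact ⟨g, fun _ => hg⟩
    · exact ⟨0, fun h => absurd h hd⟩
  choose g hg using hirr
  have hinj : ∀ d : ℕ, ∃ c : Ideal O → ZMod p, ∀ P ∈ D.S, ∀ Q ∈ D.S, D.f P = d → D.f Q = d →
      c P = c Q → P = Q := by
    intro d
    obtain ⟨φ⟩ := Function.Embedding.nonempty_of_card_le
      (α := {P // P ∈ D.S.filter (fun P => D.f P = d)}) (β := ZMod p) (by
        rw [Fintype.card_coe, ZMod.card]; exact hcard d)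
    refine ⟨fun P => if h : P ∈ D.S.filter (fun P => D.f P = d) then φ ⟨P, h⟩ else 0, ?_⟩
    intro P hP Q hQ hPd hQd h
    have h1 : P ∈ D.S.filter (fun P => D.f P = d) := by simp [hP, hPd]
    have h2 : Q ∈ D.S.filter (fun P => D.f P = d) := by simp [hQ, hQd]
    simp only [dif_pos h1, dif_pos h2] at h
    simpa using φ.injective h
  choose c hc using hinj
  let gP : Ideal O → (ZMod p)[X] := fun P => taylor (c (D.f P) P) (g (D.f P))
  have hgm : ∀ P ∈ D.S, (gP P).Monic := fun P hP => by
    rw [Monic, leadingCoeff_taylor]; exact (hg _ (D.f_pos P hP)).1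
  have hgi : ∀ P ∈ D.S, Irreducible (gP P) := fun P hP =>
    (MulEquiv.irreducible_iff (taylorEquiv (c (D.f P) P))).mpr (hg _ (D.f_pos P hP)).2.1
  have hgd : ∀ P ∈ D.S, (gP P).natDegree = D.f P := fun P hP => by
    rw [natDegree_taylor]; exact (hg _ (D.f_pos P hP)).2.2
  have hgne : ∀ P ∈ D.S, ∀ Q ∈ D.S, P ≠ Q → gP P ≠ gP Q := by
    intro P hP Q hQ hne heq
    have hf : D.f P = D.f Q := by rw [← hgd P hP, ← hgd Q hQ, heq]
    have hlt := hdist P hP Q hQ hne hf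
    have h1 : taylor (c (D.f P) P) (g (D.f P)) = taylor (c (D.f P) Q) (g (D.f P)) := by
      have : gP Q = taylor (c (D.f P) Q) (g (D.f P)) := by simp only [gP, hf]
      rw [← this]; exact heq
    have hd := (hg _ (D.f_pos P hP)).2.2
    exact hne (hc _ P hP Q hQ rfl hf.symm
      (taylor_inj_of_lt p _ (by rw [hd]; exact D.f_pos P hP) (by rw [hd]; exact hlt) _ _ h1))
  have hlift : ∀ P, ∃ G : ℤ[X], G.map (Int.castRingHom (ZMod p)) = gP P := fun P =>
    map_surjective (Int.castRingHom (ZMod p)) (ZMod.ringHom_surjective _) _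
  choose G hG using hlift
  have hx : ∀ P : D.S, ∃ x : O, aeval x (G P) ∈ (P : Ideal O) ∧ aeval x (G P) ∉ (P : Ideal O) ^ 2 ∧
      ∀ H : ℤ[X], aeval x H ∈ (P : Ideal O) →
      (G P).map (Int.castRingHom (ZMod p)) ∣ H.map (Int.castRingHom (ZMod p)) := fun ⟨P, hP⟩ =>
    exists_root p (D.f P) P (D.max P hP) (D.bot P hP) (D.mem P hP) (D.f_pos P hP) (D.norm P hP) _
      (by rw [hG]; exact hgi P hP) (by rw [hG]; exact hgd P hP)
  choose x hx using hx
  obtain ⟨η, hη⟩ := IsDedekindDomain.exists_forall_sub_mem_ideal (s := D.S) (fun P => P)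
    (fun _ => 2) (fun P hP => Ideal.prime_of_isPrime (D.bot P hP) (D.max P hP).isPrime)
    (fun _ _ _ _ h => h) x
  have hcong : ∀ (P : Ideal O) (hP : P ∈ D.S) (H : ℤ[X]),
      aeval η H - aeval (x ⟨P, hP⟩) H ∈ P ^ 2 := by
    intro P hP H
    have h1 := sub_dvd_eval_sub η (x ⟨P, hP⟩) (H.map (algebraMap ℤ O))
    rw [eval_map_algebraMap, eval_map_algebraMap] at h1
    exact Ideal.mem_of_dvd _ h1 (hη P hP)
  have key : ∀ P ∈ D.S, ∀ H : ℤ[X], aeval η H ∈ Ideal.span {(p : O)} →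
      gP P ^ D.e P ∣ H.map (Int.castRingHom (ZMod p)) := by
    intro P hP H hH
    rw [← hG]
    have hm : (p : O) ∈ P ^ D.e P := (D.mem_pow P hP _).mpr le_rfl
    refine pow_dvd_of_mem p P (D.max P hP) (D.bot P hP) (G P) η (D.e P) hm ?_ ?_ H _ le_rfl ?_
    · intro h
      apply (hx ⟨P, hP⟩).2.1
      have := Ideal.sub_mem _ h (hcong P hP (G P))
      simpa using this
    · intro H' hH'
      apply (hx ⟨P, hP⟩).2.2
      have := Ideal.sub_mem _ hH' (Ideal.pow_le_self two_ne_zero (hcong P hP H'))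
      simpa using this
    · exact (Ideal.span_singleton_le_iff_mem _).mpr hm hH
  have key2 : ∀ H : ℤ[X], H.natDegree < Module.finrank ℤ O → aeval η H ∈ Ideal.span {(p : O)} →
      H.map (Int.castRingHom (ZMod p)) = 0 := by
    intro H hd hH
    by_contra hne
    have h1 : ∏ P ∈ D.S, gP P ^ D.e P ∣ H.map (Int.castRingHom (ZMod p)) := by
      refine Finset.prod_dvd_of_coprime ?_ (fun P hP => key P hP H hH)
      intro P hP Q hQ hPQ
      refine IsCoprime.pow ?_
      refine ((hgi P hP).coprime_iff_not_dvd).mpr ?_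
      intro hd
      exact hgne P hP Q hQ hPQ (eq_of_monic_of_associated (hgm P hP) (hgm Q hQ)
        ((hgi P hP).associated_of_dvd (hgi Q hQ) hd))
    have h2 := natDegree_le_of_dvd h1 hne
    rw [natDegree_prod_of_monic _ _ (fun P hP => (hgm P hP).pow _),
      Finset.sum_congr rfl (g := fun P => D.e P * D.f P)
        (fun P hP => by rw [(hgm P hP).natDegree_pow, hgd P hP]), D.sum] at h2
    have h3 := natDegree_map_le (f := Int.castRingHom (ZMod p)) (p := H)
    omega
  refine ⟨η, ?_⟩
  set n := Module.finrank ℤ O with hn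
  let poly : (Fin n → ZMod p) → ℤ[X] := fun a => ∑ i : Fin n, monomial (i : ℕ) ((a i).val : ℤ)
  let Φ : (Fin n → ZMod p) → O ⧸ Ideal.span {(p : O)} := fun a =>
    Ideal.Quotient.mk _ (aeval η (poly a))
  have hcardq : Nat.card (O ⧸ Ideal.span {(p : O)}) = p ^ n := Ideal.absNorm_span_natCast (S := O) p
  have hfin : Finite (O ⧸ Ideal.span {(p : O)}) := by
    apply Nat.finite_of_card_ne_zero
    rw [hcardq]; exact pow_ne_zero _ hpp.ne_zero
  have hnpos : 0 < n := Module.finrank_pos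
  have hcoeff : ∀ (a : Fin n → ZMod p) (i : Fin n), (poly a).coeff i = ((a i).val : ℤ) := by
    intro a i
    simp only [poly, finsetSum_coeff, coeff_monomial]
    rw [Finset.sum_eq_single i] <;> simp +contextual [Fin.ext_iff]
  have hdeg : ∀ a, (poly a).natDegree ≤ n - 1 := by
    intro a
    refine natDegree_sum_le_of_forall_le _ _ fun i _ => (natDegree_monomial_le _).trans ?_
    have := i.2
    omega
  have hΦ : Function.Injective Φ := by
    intro a b hab
    have h1 : aeval η (poly a - poly b) ∈ Ideal.span {(p : O)} := by
      rw [map_sub]; exact Ideal.Quotient.eq.mp hab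
    have h2 := key2 (poly a - poly b) (by
      have := natDegree_sub_le_of_le (hdeg a) (hdeg b)
      simp at this
      omega) h1
    funext i
    have h3 := congrArg (fun q => coeff q (i : ℕ)) h2
    simp only [coeff_map, coeff_sub, hcoeff, coeff_zero] at h3
    simpa [sub_eq_zero] using h3
  have hbij := hΦ.bijective_of_nat_card_le (by rw [hcardq]; simp)
  intro y
  obtain ⟨a, ha⟩ := hbij.2 (Ideal.Quotient.mk _ y)
  exact ⟨poly a, Ideal.Quotient.eq.mp ha.symm⟩

end

section


theorem index_lemma (K : Type*) [Field K] [NumberField K] (p : ℕ) (hp : p.Prime) (η : 𝓞 K)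
    (h : ∀ x : 𝓞 K, ∃ H : ℤ[X], x - aeval η H ∈ Ideal.span {(p : 𝓞 K)}) :
    Algebra.adjoin ℚ {(η : K)} = ⊤ ∧
      ¬ p ∣ (Algebra.adjoin ℤ {η} : Subalgebra ℤ (𝓞 K)).toSubring.toAddSubgroup.index := by
  set A := (Algebra.adjoin ℤ {η} : Subalgebra ℤ (𝓞 K)) with hA
  let N : Submodule ℤ (𝓞 K) := Subalgebra.toSubmodule A
  have hmemA : ∀ H : ℤ[X], aeval η H ∈ A := fun H => aeval_mem_adjoin_singleton ℤ η
  obtain ⟨r, hr1, hr⟩ := Submodule.exists_sub_one_mem_and_smul_eq_zero_of_fg_of_le_smul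
    (Ideal.span {(p : ℤ)}) (⊤ : Submodule ℤ ((𝓞 K) ⧸ N)) Module.Finite.fg_top (by
      rintro z -
      obtain ⟨x, rfl⟩ := Submodule.Quotient.mk_surjective _ z
      obtain ⟨H, hH⟩ := h x
      obtain ⟨y, hy⟩ := Ideal.mem_span_singleton.mp hH
      have h1 : (Submodule.Quotient.mk x : (𝓞 K) ⧸ N) = (p : ℤ) • Submodule.Quotient.mk y := by
        rw [← Submodule.Quotient.mk_smul, Submodule.Quotient.eq]
        have : x - (p : ℤ) • y = aeval η H := by
          rw [zsmul_eq_mul]; push_cast; rw [← hy]; ring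
        rw [this]; exact hmemA H
      rw [h1]
      exact Submodule.smul_mem_smul (Ideal.mem_span_singleton_self _) trivial)
  rw [Ideal.mem_span_singleton] at hr1
  have hrA : ∀ x : 𝓞 K, r • x ∈ A := by
    intro x
    have := hr (Submodule.Quotient.mk x) trivial
    rw [← Submodule.Quotient.mk_smul, Submodule.Quotient.mk_eq_zero] at this
    exact this
  have hr0 : r ≠ 0 := by
    rintro rfl
    rw [zero_sub, dvd_neg] at hr1
    exact hp.one_lt.ne' (by exact_mod_cast Int.natAbs_dvd_natAbs.mpr hr1 |> Nat.dvd_one.mp)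
  constructor
  · rw [eq_top_iff]
    rintro z -
    obtain ⟨x, m, hm, rfl⟩ : ∃ (x : 𝓞 K) (m : ℤ), m ≠ 0 ∧ z = (x : K) / m := by
      obtain ⟨⟨x, m⟩, hx⟩ := IsLocalization.surj (Algebra.algebraMapSubmonoid (𝓞 K) (nonZeroDivisors ℤ)) z
      obtain ⟨m', hm', hmm⟩ := m.2
      have hm0 : m' ≠ 0 := nonZeroDivisors.ne_zero hm'
      refine ⟨x, m', hm0, ?_⟩
      rw [eq_div_iff (by exact_mod_cast hm0)]
      dsimp only at hx
      rw [← hmm] at hx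
      simpa using hx
    have hA2 : ∀ y ∈ A, (y : K) ∈ Algebra.adjoin ℚ {(η : K)} := by
      intro y hy
      rw [hA, Algebra.adjoin_singleton_eq_range_aeval] at hy
      obtain ⟨H, rfl⟩ := hy
      have : ((aeval η H : 𝓞 K) : K) = aeval (η : K) (H.map (algebraMap ℤ ℚ)) := by
        rw [aeval_map_algebraMap]
        exact (aeval_algebraMap_apply K η H).symm
      simp only [AlgHom.toRingHom_eq_coe, RingHom.coe_coe]
      rw [this]
      exact aeval_mem_adjoin_singleton ℚ _
    have h3 := Subalgebra.smul_mem _ (hA2 _ (hrA x)) ((1 : ℚ) / (r * m))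
    convert h3 using 1
    rw [Algebra.smul_def]
    have hrK : (r : K) ≠ 0 := by exact_mod_cast hr0
    have hmK : (m : K) ≠ 0 := by exact_mod_cast hm
    simp
    field_simp
  · intro hdvd
    have hfin : Finite ((𝓞 K) ⧸ N) := by
      apply Module.finite_of_fg_torsion
      intro x
      exact ⟨⟨r, mem_nonZeroDivisors_of_ne_zero hr0⟩, hr x trivial⟩
    have hdvd' : p ∣ Nat.card ((𝓞 K) ⧸ N) := hdvd
    have : Fact p.Prime := ⟨hp⟩
    obtain ⟨x, hx⟩ := exists_prime_addOrderOf_dvd_card' p hdvd'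
    have h1 : (p : ℤ) • x = 0 := by
      rw [← hx]; simp [addOrderOf_nsmul_eq_zero]
    have h2 : r • x = 0 := hr x trivial
    obtain ⟨t, ht⟩ := hr1
    have h3 : x = 0 := by
      have : r • x = x + t • ((p : ℤ) • x) := by
        rw [smul_smul, ← sub_eq_iff_eq_add', ← one_smul ℤ x, smul_smul, mul_one, ← sub_smul, ht, smul_smul]
        ring_nf
      rw [h2, h1, smul_zero, add_zero] at this
      exact this.symm
    rw [h3, addOrderOf_zero] at hx
    exact hp.one_lt.ne hx

theorem norm_lemma (a b : ℤ)
    (hFirr : Irreducible (X ^ 9 + C (a : ℚ) * X + C (b : ℚ)))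
    (K : Type*) [Field K] [NumberField K] (θ : 𝓞 K)
    (hθ : Polynomial.aeval (θ : K) (X ^ 9 + C (a : ℚ) * X + C (b : ℚ)) = 0)
    (hgen : Algebra.adjoin ℚ {(θ : K)} = ⊤) :
    Module.finrank ℤ (𝓞 K) = 9 ∧
    ∀ s : ℤ, Algebra.norm ℤ ((s : 𝓞 K) - θ) = s ^ 9 + a * s + b := by
  have hmonic : (X ^ 9 + C (a : ℚ) * X + C (b : ℚ)).Monic := by monicity!
  have hdeg : (X ^ 9 + C (a : ℚ) * X + C (b : ℚ)).natDegree = 9 := by compute_degree!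
  have hmin := minpoly.eq_of_irreducible_of_monic hFirr hθ hmonic
  have hint : IsIntegral ℚ (θ : K) := Algebra.IsIntegral.isIntegral _
  let pb := PowerBasis.ofAdjoinEqTop hint hgen
  have hfr : Module.finrank ℚ K = 9 := by
    rw [pb.finrank, PowerBasis.ofAdjoinEqTop_dim, ← hmin, hdeg]
  refine ⟨by rw [RingOfIntegers.rank, hfr], fun s => ?_⟩
  have h1 : ((Algebra.norm ℤ ((s : 𝓞 K) - θ) : ℤ) : ℚ) = ((s ^ 9 + a * s + b : ℤ) : ℚ) := by
    rw [Algebra.coe_norm_int, Algebra.norm_apply]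
    have h2 := LinearMap.eval_charpoly (Algebra.lmul ℚ K (θ : K)) (s : ℚ)
    have h3 : (Algebra.lmul ℚ K (θ : K)).charpoly = X ^ 9 + C (a : ℚ) * X + C (b : ℚ) := by
      rw [hmin]
      have := charpoly_leftMulMatrix pb
      rw [PowerBasis.ofAdjoinEqTop_gen] at this
      rw [← this, Algebra.leftMulMatrix_apply, LinearMap.charpoly_toMatrix]
    rw [h3] at h2
    have h4 : (Algebra.lmul ℚ K) ↑((s : 𝓞 K) - θ) = algebraMap ℚ (Module.End ℚ K) s - Algebra.lmul ℚ K θ := by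
      ext y
      simp
    rw [h4, ← h2]
    simp
  exact_mod_cast h1

end

section

variable {O : Type*} [CommRing O] [IsDedekindDomain O] [Module.Free ℤ O] [Module.Finite ℤ O]

theorem norm_dvd (p : ℕ) (D : PrimeData O p) (T : Finset (Ideal O)) (hT : T ⊆ D.S)
    (w : Ideal O → ℕ) (x : O) (hx : ∀ P ∈ T, x ∈ P ^ w P) :
    ((p ^ (∑ P ∈ T, w P * D.f P) : ℕ) : ℤ) ∣ Algebra.norm ℤ x := by
  classical
  have h1 : ∏ P ∈ T, P ^ w P ∣ Ideal.span {x} := by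
    refine Finset.prod_dvd_of_coprime ?_ ?_
    · intro P hP Q hQ hne
      refine IsCoprime.pow ?_
      rw [Ideal.isCoprime_iff_sup_eq]
      exact (D.max P (hT hP)).coprime_of_ne (D.max Q (hT hQ)) hne
    · intro P hP
      rw [Ideal.dvd_iff_le, Ideal.span_singleton_le_iff_mem]
      exact hx P hP
  have h2 := map_dvd Ideal.absNorm h1
  rw [map_prod, Ideal.absNorm_span_singleton, Finset.prod_congr rfl
    (g := fun P => p ^ (w P * D.f P)) (fun P hP => by
      rw [map_pow, D.norm P (hT hP), ← pow_mul, mul_comm]), Finset.prod_pow_eq_pow_sum] at h2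
  exact Int.natCast_dvd.mpr h2

theorem exists_residue (p : ℕ) [Fact p.Prime] (D : PrimeData O p) (P : Ideal O) (hP : P ∈ D.S)
    (hf : D.f P = 1) (x : O) : ∃ r : ZMod p, ∀ s : ℤ, (s : ZMod p) = r → (s : O) - x ∈ P := by
  have hp : p.Prime := Fact.out
  have hcard : Nat.card (O ⧸ P) = p := by
    have := D.norm P hP
    rwa [hf, pow_one] at this
  have hfin : Finite (O ⧸ P) := Nat.finite_of_card_ne_zero (by rw [hcard]; exact hp.ne_zero)
  have hnt : Nontrivial (O ⧸ P) := Ideal.Quotient.nontrivial_iff.mpr (D.max P hP).ne_top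
  have hchar : CharP (O ⧸ P) p := by
    refine (CharP.charP_iff_prime_eq_zero hp).mpr ?_
    have := Ideal.Quotient.eq_zero_iff_mem.mpr (D.mem P hP)
    simpa using this
  let φ : ZMod p →+* O ⧸ P := ZMod.castHom dvd_rfl _
  have hφ : Function.Injective φ := φ.injective
  have hb := hφ.bijective_of_nat_card_le (by rw [hcard]; simp)
  obtain ⟨r, hr⟩ := hb.2 (Ideal.Quotient.mk P x)
  refine ⟨r, fun s hs => ?_⟩
  rw [← Ideal.Quotient.eq, ← hr, ← hs]
  simp

theorem count_unram (p : ℕ) [Fact p.Prime] (hp5 : 5 ≤ p) (D : PrimeData O p) (a b : ℤ) (θ : O)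
    (hnorm : ∀ s : ℤ, Algebra.norm ℤ ((s : O) - θ) = s ^ 9 + a * s + b)
    (hab : ¬ ((p : ℤ) ∣ a ∧ (p : ℤ) ∣ b)) :
    (D.S.filter (fun P => D.f P = 1)).card ≤ p := by
  classical
  have hp : p.Prime := Fact.out
  have hpI : Prime (p : ℤ) := Nat.prime_iff_prime_int.mp hp
  have hr : ∀ P : Ideal O, ∃ r : ZMod p, P ∈ D.S → D.f P = 1 →
      ∀ s : ℤ, (s : ZMod p) = r → (s : O) - θ ∈ P := by
    intro P
    by_cases h : P ∈ D.S ∧ D.f P = 1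
    · obtain ⟨r, hr⟩ := exists_residue p D P h.1 h.2 θ
      exact ⟨r, fun _ _ => hr⟩
    · exact ⟨0, fun h1 h2 => absurd ⟨h1, h2⟩ h⟩
  choose r hr using hr
  set U := D.S.filter (fun P => D.f P = 1) with hU
  let T : ZMod p → Finset (Ideal O) := fun z => U.filter (fun P => r P = z)
  have hdvd : ∀ s : ℤ, (p : ℤ) ^ (T s).card ∣ s ^ 9 + a * s + b := by
    intro s
    have h1 := norm_dvd p D (T s) (by intro P hP; simp [T, hU] at hP; exact hP.1.1) (fun _ => 1)
      ((s : O) - θ) (by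
        intro P hP
        simp [T, hU] at hP
        rw [pow_one]
        exact hr P hP.1.1 hP.1.2 s hP.2.symm)
    rw [hnorm, Finset.sum_congr rfl (g := fun _ => 1) (by
      intro P hP
      simp [T, hU] at hP
      simp [hP.1.2])] at h1
    simpa using h1
  have hs : ∀ z : ZMod p, ∃ s : ℤ, (s : ZMod p) = z := ZMod.intCast_surjective
  have hdvd' : ∀ (s : ℤ) (k : ℕ) (t : ℤ), k ≤ (T s).card →
      (p : ℤ) ^ k ∣ (s + p * t) ^ 9 + a * (s + p * t) + b := by
    intro s k t hk
    have h1 := hdvd (s + p * t)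
    have h2 : ((s + p * t : ℤ) : ZMod p) = s := by push_cast; simp
    rw [h2] at h1
    exact (pow_dvd_pow _ hk).trans h1
  have hsmall : ∀ n : ℕ, 0 < n → n < p → ¬ (p : ℤ) ∣ (n : ℤ) := by
    intro n h0 hn h
    have := Nat.le_of_dvd h0 (Int.natCast_dvd_natCast.mp h)
    omega
  have h2' : ¬ (p : ℤ) ∣ 2 := hsmall 2 (by norm_num) (by omega)
  have h3' : ¬ (p : ℤ) ∣ 3 := hsmall 3 (by norm_num) (by omega)
  have h8 : ¬ (p : ℤ) ∣ 8 := fun h => h2' (hpI.dvd_of_dvd_pow (n := 3) (by norm_num; exact h))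
  have h9 : ¬ (p : ℤ) ∣ 9 := fun h => h3' (hpI.dvd_of_dvd_pow (n := 2) (by norm_num; exact h))
  -- double roots
  have hdouble : ∀ s : ℤ, 2 ≤ (T s).card → (p : ℤ) ∣ 9 * s ^ 8 + a := by
    intro s h
    have e1 := hdvd' s 2 0 h
    have e2 := hdvd' s 2 1 h
    have e3 := dvd_sub e2 e1
    have e4 : (p : ℤ) ^ 2 ∣ p * (9 * s ^ 8 + a) := by
      have e5 : (p : ℤ) * (9 * s ^ 8 + a) =
        ((s + p * 1) ^ 9 + a * (s + p * 1) + b - ((s + p * 0) ^ 9 + a * (s + p * 0) + b)) -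
        p ^ 2 * (36 * s ^ 7 + 84 * s ^ 6 * p + 126 * s ^ 5 * p ^ 2 + 126 * s ^ 4 * p ^ 3
          + 84 * s ^ 3 * p ^ 4 + 36 * s ^ 2 * p ^ 5 + 9 * s * p ^ 6 + p ^ 7) := by ring
      rw [e5]
      exact dvd_sub e3 (dvd_mul_right _ _)
    rw [pow_two] at e4
    exact (mul_dvd_mul_iff_left hpI.ne_zero).mp e4
  have hroot : ∀ s : ℤ, 1 ≤ (T s).card → (p : ℤ) ∣ s ^ 9 + a * s + b := by
    intro s h
    simpa using hdvd' s 1 0 h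
  -- if `s` is a double root then `p ∤ s`
  have hdn : ∀ s : ℤ, 2 ≤ (T s).card → ¬ (p : ℤ) ∣ s := by
    intro s h hps
    have ha : (p : ℤ) ∣ a := (dvd_add_right (Dvd.dvd.mul_left (dvd_pow hps (by norm_num)) 9)).mp (hdouble s h)
    refine hab ⟨ha, ?_⟩
    exact (dvd_add_right (dvd_add (dvd_pow hps (by norm_num)) (ha.mul_right s))).mp (hroot s (by omega))
  have htriple : ∀ s : ℤ, (T s).card ≤ 2 := by
    intro s
    by_contra h
    push Not at h
    have e1 := hdvd' s 3 0 h
    have e2 := hdvd' s 3 1 h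
    have e3 := hdvd' s 3 (-1) h
    have e4 : (p : ℤ) ^ 3 ∣ p ^ 2 * (72 * s ^ 7) := by
      have e5 : (p : ℤ) ^ 2 * (72 * s ^ 7) =
        ((s + p * 1) ^ 9 + a * (s + p * 1) + b) + ((s + p * (-1)) ^ 9 + a * (s + p * (-1)) + b)
         - 2 * ((s + p * 0) ^ 9 + a * (s + p * 0) + b) -
        p ^ 3 * (p * (252 * s ^ 5 + 168 * s ^ 3 * p ^ 2 + 18 * s * p ^ 4)) := by ring
      rw [e5]
      exact dvd_sub (dvd_sub (dvd_add e2 e3) (e1.mul_left 2)) (dvd_mul_right _ _)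
    rw [show (p : ℤ) ^ 3 = p ^ 2 * p by ring] at e4
    have e6 := (mul_dvd_mul_iff_left (pow_ne_zero 2 hpI.ne_zero)).mp e4
    rcases hpI.dvd_or_dvd e6 with e7 | e7
    · rw [show (72 : ℤ) = 8 * 9 by norm_num] at e7
      rcases hpI.dvd_or_dvd e7 with e8 | e8
      · exact h8 e8
      · exact h9 e8
    · exact hdn s (by omega) (hpI.dvd_of_dvd_pow e7)
  have hlin : ∀ s : ℤ, 2 ≤ (T s).card → (p : ℤ) ∣ 8 * a * s + 9 * b := by
    intro s h
    have e1 := (hroot s (by omega)).mul_left 9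
    have e2 := (hdouble s h).mul_left s
    have := dvd_sub e1 e2
    rwa [show 9 * (s ^ 9 + a * s + b) - s * (9 * s ^ 8 + a) = 8 * a * s + 9 * b by ring] at this
  have hda : ∀ s : ℤ, 2 ≤ (T s).card → ¬ (p : ℤ) ∣ a := by
    intro s h ha
    have e1 := (dvd_add_left ha).mp (hdouble s h)
    rcases hpI.dvd_or_dvd e1 with e2 | e2
    · exact h9 e2
    · exact hdn s h (hpI.dvd_of_dvd_pow e2)
  have hsum : U.card = ∑ z : ZMod p, (T z).card :=
    Finset.card_eq_sum_card_fiberwise (f := r) (fun _ _ => Finset.mem_coe.mpr (Finset.mem_univ _))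
  rw [hsum]
  by_cases hex : ∃ s : ℤ, 2 ≤ (T s).card
  · obtain ⟨s₀, hs₀⟩ := hex
    have hbn : ¬ (p : ℤ) ∣ b := by
      intro hb
      have e1 := (dvd_add_left (hb.mul_left 9)).mp (hlin s₀ hs₀)
      rcases hpI.dvd_or_dvd e1 with e2 | e2
      · rcases hpI.dvd_or_dvd e2 with e3 | e3
        · exact h8 e3
        · exact hda s₀ hs₀ e3
      · exact hdn s₀ hs₀ e2
    have hle : ∀ z : ZMod p, (T z).card + (if z = 0 then 1 else 0) ≤
        1 + (if z = (s₀ : ZMod p) then 1 else 0) := by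
      intro z
      by_cases hz : z = 0
      · have : (T z).card = 0 := by
          by_contra h
          have := hroot 0 (by rw [Int.cast_zero, ← hz]; omega)
          simp at this
          exact hbn this
        rw [this]
        split_ifs <;> omega
      · by_cases hz2 : z = (s₀ : ZMod p)
        · have := htriple s₀
          rw [← hz2] at this
          simp [hz, ← hz2]; omega
        · simp only [hz, hz2, if_false, add_zero]
          by_contra h
          push Not at h
          obtain ⟨s, rfl⟩ := hs z
          have e1 := dvd_sub (hlin s h) (hlin s₀ hs₀)
          rw [show 8 * a * s + 9 * b - (8 * a * s₀ + 9 * b) = 8 * a * (s - s₀) by ring] at e1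
          rcases hpI.dvd_or_dvd e1 with e2 | e2
          · rcases hpI.dvd_or_dvd e2 with e3 | e3
            · exact h8 e3
            · exact hda s₀ hs₀ e3
          · apply hz2
            rw [← sub_eq_zero, ← Int.cast_sub]
            exact (ZMod.intCast_zmod_eq_zero_iff_dvd _ _).mpr e2
    have := Finset.sum_le_sum (fun z (_ : z ∈ (Finset.univ : Finset (ZMod p))) => hle z)
    rw [Finset.sum_add_distrib, Finset.sum_add_distrib] at this
    simp [ZMod.card] at this
    exact this
  · push Not at hex
    calc ∑ z : ZMod p, (T z).card ≤ ∑ z : ZMod p, 1 := by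
          refine Finset.sum_le_sum fun z _ => ?_
          obtain ⟨s, rfl⟩ := hs z
          have := hex s
          omega
      _ = p := by simp [ZMod.card]

end

section

variable {O : Type*} [CommRing O] [IsDedekindDomain O] [Module.Free ℤ O] [Module.Finite ℤ O]

theorem count_ram (p : ℕ) [Fact p.Prime] (hp5 : 5 ≤ p) (D : PrimeData O p) (a b : ℤ) (θ : O)
    (ha0 : a ≠ 0) (hb0 : b ≠ 0) (hfr : Module.finrank ℤ O = 9)
    (hθ : θ ^ 9 + (a : O) * θ + (b : O) = 0)
    (hnorm : ∀ s : ℤ, Algebra.norm ℤ ((s : O) - θ) = s ^ 9 + a * s + b)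
    (ha : (p : ℤ) ∣ a) (hb : (p : ℤ) ∣ b)
    (hred : ¬ ((p : ℤ) ^ 8 ∣ a ∧ (p : ℤ) ^ 9 ∣ b)) :
    (D.S.filter (fun P => D.f P = 1)).card ≤ p := by
  classical
  have hp : p.Prime := Fact.out
  have hpI : Prime (p : ℤ) := Nat.prime_iff_prime_int.mp hp
  refine (Finset.card_filter_le _ _).trans (le_trans ?_ hp5)
  obtain ⟨α, a', ha', rfl⟩ : ∃ α : ℕ, ∃ a' : ℤ, ¬ (p : ℤ) ∣ a' ∧ a = p ^ α * a' := by
    obtain ⟨α, a', h1, h2⟩ := WfDvdMonoid.max_power_factor ha0 hpI.irreducible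
    exact ⟨α, a', h1, h2⟩
  obtain ⟨β, b', hb', rfl⟩ : ∃ β : ℕ, ∃ b' : ℤ, ¬ (p : ℤ) ∣ b' ∧ b = p ^ β * b' := by
    obtain ⟨α, a', h1, h2⟩ := WfDvdMonoid.max_power_factor hb0 hpI.irreducible
    exact ⟨α, a', h1, h2⟩
  have hα : 1 ≤ α := by
    by_contra h
    have : α = 0 := by omega
    subst this
    simp at ha
    exact ha' ha
  have hβ : 1 ≤ β := by
    by_contra h
    have : β = 0 := by omega
    subst this
    simp at hb
    exact hb' hb
  have hred' : ∀ k, 1 ≤ k → 8 * k ≤ α → 9 * k ≤ β → False := by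
    intro k hk h1 h2
    exact hred ⟨(pow_dvd_pow _ (by omega)).mul_right _, (pow_dvd_pow _ (by omega)).mul_right _⟩
  have hθ0 : θ ≠ 0 := by
    rintro rfl
    have := hnorm 0
    simp [hfr] at this
    rcases this with h | h
    · exact hp.ne_zero h.1
    · exact hb' (by simp [h])
  have key : ∀ P : Ideal O, ∃ w : ℕ, P ∈ D.S → θ ∈ P ^ w ∧
      ¬ (9 * w < α * D.e P + w ∧ 9 * w < β * D.e P) ∧
      ¬ (α * D.e P + w < 9 * w ∧ α * D.e P + w < β * D.e P) ∧
      ¬ (β * D.e P < 9 * w ∧ β * D.e P < α * D.e P + w) := by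
    intro P
    by_cases hP : P ∈ D.S
    swap
    · exact ⟨0, fun h => absurd h hP⟩
    have hpr : Prime P := Ideal.prime_of_isPrime (D.bot P hP) (D.max P hP).isPrime
    let v : O → ℕ∞ := fun y => emultiplicity P (Ideal.span {y})
    have hmem : ∀ (y : O) (j : ℕ), y ∈ P ^ j ↔ (j : ℕ∞) ≤ v y := by
      intro y j
      rw [← Ideal.span_singleton_le_iff_mem, ← Ideal.dvd_iff_le, pow_dvd_iff_le_emultiplicity]
    have hmul : ∀ x y, v (x * y) = v x + v y := by
      intro x y
      simp only [v]
      rw [← Ideal.span_singleton_mul_span_singleton, emultiplicity_mul hpr]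
    have hpow : ∀ x (k : ℕ), v (x ^ k) = k * v x := by
      intro x k
      simp only [v]
      rw [← Ideal.span_singleton_pow, emultiplicity_pow hpr]
    have hvp : v (p : O) = D.e P := by
      apply le_antisymm
      · rw [← not_lt]
        intro h
        have h1 : ((D.e P + 1 : ℕ) : ℕ∞) ≤ v (p : O) := by
          push_cast; exact Order.add_one_le_of_lt h
        have := (D.mem_pow P hP _).mp ((hmem _ _).mpr h1)
        omega
      · exact (hmem _ _).mp ((D.mem_pow P hP _).mpr le_rfl)
    have hunit : ∀ c : ℤ, ¬ (p : ℤ) ∣ c → v (c : O) = 0 := by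
      intro c hc
      by_contra h
      have h1 : (c : O) ∈ P := by
        have := (hmem (c : O) 1).mpr (by
          push_cast; exact ENat.one_le_iff_ne_zero.mpr h)
        simpa using this
      obtain ⟨u, w, huw⟩ := (hpI.coprime_iff_not_dvd).mpr hc
      apply (D.max P hP).ne_top
      rw [Ideal.eq_top_iff_one]
      have h2 : (1 : O) = (u : O) * (p : O) + (w : O) * (c : O) := by exact_mod_cast congrArg (Int.cast : ℤ → O) huw.symm
      rw [h2]
      exact Ideal.add_mem _ (Ideal.mul_mem_left _ _ (D.mem P hP)) (Ideal.mul_mem_left _ _ h1)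
    have hultra : ∀ (x y z : O) (i j k : ℕ), x + y + z = 0 → v x = i → v y = j → v z = k →
        ¬ (i < j ∧ i < k) := by
      intro x y z i j k hxyz hx hy hz ⟨h1, h2⟩
      have hy' : y ∈ P ^ (i + 1) := (hmem _ _).mpr (by rw [hy]; exact_mod_cast h1)
      have hz' : z ∈ P ^ (i + 1) := (hmem _ _).mpr (by rw [hz]; exact_mod_cast h2)
      have hx' : x ∈ P ^ (i + 1) := by
        have : x = -(y + z) := by linear_combination hxyz
        rw [this]
        exact Ideal.neg_mem_iff _ |>.mpr (Ideal.add_mem _ hy' hz')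
      have := (hmem _ _).mp hx'
      rw [hx] at this
      have : i + 1 ≤ i := by exact_mod_cast this
      omega
    have hfinite : v θ ≠ ⊤ := by
      have : FiniteMultiplicity P (Ideal.span {θ}) :=
        FiniteMultiplicity.of_prime_left hpr (by simpa using hθ0)
      exact finiteMultiplicity_iff_emultiplicity_ne_top.mp this
    obtain ⟨w, hw⟩ := ENat.ne_top_iff_exists.mp hfinite
    refine ⟨w, fun _ => ⟨(hmem _ _).mpr hw.le, ?_⟩⟩
    have v1 : v (θ ^ 9) = (9 * w : ℕ) := by rw [hpow, ← hw]; norm_cast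
    have v2 : v (((p ^ α * a' : ℤ) : O) * θ) = (α * D.e P + w : ℕ) := by
      push_cast
      rw [hmul, hmul, hpow, hvp, hunit _ ha', ← hw, add_zero]
    have v3 : v ((p ^ β * b' : ℤ) : O) = (β * D.e P : ℕ) := by
      push_cast
      rw [hmul, hpow, hvp, hunit _ hb', add_zero]
    exact ⟨hultra _ _ _ _ _ _ hθ v1 v2 v3,
      hultra _ _ _ _ _ _ (by rw [← hθ]; ring) v2 v1 v3,
      hultra _ _ _ _ _ _ (by rw [← hθ]; ring) v3 v1 v2⟩
  choose w hw using key
  have hsum := D.sum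
  rw [hfr] at hsum
  rcases le_or_gt (8 * β) (9 * α) with hc | hc
  · -- single slope
    have he : ∀ P ∈ D.S, 3 ≤ D.e P := by
      intro P hP
      obtain ⟨-, h1, h2, h3⟩ := hw P hP
      have hc' : 8 * (β * D.e P) ≤ 9 * (α * D.e P) := by nlinarith [D.e_pos P hP]
      have heq : 9 * w P = β * D.e P := by omega
      have h3e : 3 ∣ D.e P := by
        by_contra hn
        have hco : Nat.Coprime 9 (D.e P) := by
          have : Nat.Coprime 3 (D.e P) := (Nat.Prime.coprime_iff_not_dvd Nat.prime_three).mpr hn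
          exact Nat.Coprime.pow_left 2 this
        obtain ⟨k, rfl⟩ := hco.dvd_of_dvd_mul_right (Dvd.intro _ heq)
        exact hred' k (by omega) (by omega) (by omega)
      exact Nat.le_of_dvd (D.e_pos P hP) h3e
    have : D.S.card * 3 ≤ ∑ P ∈ D.S, D.e P * D.f P := by
      rw [← smul_eq_mul]
      refine Finset.card_nsmul_le_sum _ _ _ fun P hP => ?_
      nlinarith [he P hP, D.f_pos P hP]
    omega
  · -- two slopes
    have hstep : ∀ P ∈ D.S, (8 * w P = α * D.e P ∧ 2 ≤ D.e P) ∨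
        8 * w P = α * D.e P + (8 * β - 9 * α) * D.e P := by
      intro P hP
      obtain ⟨-, h1, h2, h3⟩ := hw P hP
      have hc' : 9 * (α * D.e P) < 8 * (β * D.e P) := by nlinarith [D.e_pos P hP]
      by_cases heq : 8 * w P = α * D.e P
      · left
        refine ⟨heq, ?_⟩
        have h2e : 2 ∣ D.e P := by
          by_contra hn
          have hco : Nat.Coprime 8 (D.e P) := by
            have : Nat.Coprime 2 (D.e P) := (Nat.Prime.coprime_iff_not_dvd Nat.prime_two).mpr hn
            exact Nat.Coprime.pow_left 3 this
          obtain ⟨k, rfl⟩ := hco.dvd_of_dvd_mul_right (Dvd.intro _ heq)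
          exact hred' k (by omega) (by omega) (by omega)
        exact Nat.le_of_dvd (D.e_pos P hP) h2e
      · right
        rw [Nat.sub_mul, mul_assoc, mul_assoc]
        omega
    set γ := 8 * β - 9 * α with hγ
    have hγ1 : 1 ≤ γ := by omega
    let S2 := D.S.filter (fun P => 8 * w P = α * D.e P + γ * D.e P)
    have hnd := norm_dvd p D D.S subset_rfl w ((0 : ℤ) - θ : O) (by
      intro P hP
      rw [Int.cast_zero, zero_sub]
      exact Ideal.neg_mem_iff _ |>.mpr (hw P hP).1)
    rw [hnorm] at hnd
    have hle : ∑ P ∈ D.S, w P * D.f P ≤ β := by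
      by_contra hn
      push Not at hn
      have h1 : (p : ℤ) ^ (β + 1) ∣ p ^ β * b' := by
        refine (pow_dvd_pow _ hn).trans ?_
        simpa using hnd
      rw [pow_succ] at h1
      exact hb' ((mul_dvd_mul_iff_left (pow_ne_zero _ hpI.ne_zero)).mp h1)
    have hterm : ∀ P ∈ D.S, α * (D.e P * D.f P) +
        (if 8 * w P = α * D.e P + γ * D.e P then γ else 0) ≤ 8 * (w P * D.f P) := by
      intro P hP
      have hf1 := D.f_pos P hP
      have he1 := D.e_pos P hP
      split_ifs with h
      · have : 8 * (w P * D.f P) = α * (D.e P * D.f P) + γ * (D.e P * D.f P) := by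
          rw [← mul_assoc, h]; ring
        rw [this]
        have : 1 ≤ D.e P * D.f P := Nat.mul_pos he1 hf1
        nlinarith
      · rcases hstep P hP with h1 | h1
        · rw [← mul_assoc, ← mul_assoc, h1.1]; simp
        · exact absurd h1 h
    have h8 := Finset.sum_le_sum hterm
    rw [Finset.sum_add_distrib, ← Finset.mul_sum, ← Finset.mul_sum, hsum, ← Finset.sum_filter,
      Finset.sum_const, smul_eq_mul] at h8
    have hS2 : S2.card ≤ 1 := by
      have : S2.card * γ ≤ 1 * γ := by
        have h9 : α * 9 + S2.card * γ ≤ 8 * ∑ P ∈ D.S, w P * D.f P := h8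
        omega
      exact Nat.le_of_mul_le_mul_right this hγ1
    have hterm2 : ∀ P ∈ D.S, 2 ≤ D.e P * D.f P +
        (if 8 * w P = α * D.e P + γ * D.e P then 1 else 0) := by
      intro P hP
      have hf1 := D.f_pos P hP
      have he1 := D.e_pos P hP
      split_ifs with h
      · have : 1 ≤ D.e P * D.f P := Nat.mul_pos he1 hf1
        omega
      · rcases hstep P hP with h1 | h1
        · nlinarith [h1.2]
        · exact absurd h1 h
    have h9 := Finset.card_nsmul_le_sum _ _ _ hterm2
    rw [Finset.sum_add_distrib, hsum, ← Finset.sum_filter, Finset.sum_const, smul_eq_mul,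
      smul_eq_mul] at h9
    have h10 : D.S.card * 2 ≤ 9 + S2.card * 1 := h9
    omega

end


theorem reduced_case (a b : ℤ) (hab : a * b ≠ 0)
    (hFirr : Irreducible (X ^ 9 + C (a : ℚ) * X + C (b : ℚ)))
    (K : Type*) [Field K] [NumberField K] (θ : K)
    (hθ : Polynomial.aeval θ (X ^ 9 + C (a : ℚ) * X + C (b : ℚ)) = 0)
    (hgen : Algebra.adjoin ℚ {θ} = ⊤)
    (p : ℕ) (hp : p.Prime) (hp5 : 5 ≤ p)
    (hred : ¬ ((p:ℤ)^8 ∣ a ∧ (p:ℤ)^9 ∣ b)) :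
    ∃ η : 𝓞 K, Algebra.adjoin ℚ {(η : K)} = ⊤ ∧
      ¬ p ∣ (Algebra.adjoin ℤ {η} : Subalgebra ℤ (𝓞 K)).toSubring.toAddSubgroup.index := by
  classical
  haveI : Fact p.Prime := ⟨hp⟩
  have hθ1 : θ ^ 9 + (a : K) * θ + (b : K) = 0 := by
    simpa using hθ
  have hint : IsIntegral ℤ θ := by
    refine ⟨X ^ 9 + C a * X + C b, by monicity!, ?_⟩
    rw [eval₂_add, eval₂_add, eval₂_mul, eval₂_pow, eval₂_X, eval₂_C, eval₂_C]
    simpa using hθ1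
  obtain ⟨t, rfl⟩ : ∃ t : 𝓞 K, (t : K) = θ := ⟨⟨θ, hint⟩, rfl⟩
  have ht : t ^ 9 + (a : 𝓞 K) * t + (b : 𝓞 K) = 0 := by
    apply RingOfIntegers.coe_injective
    simpa using hθ1
  obtain ⟨hfr, hnorm⟩ := norm_lemma a b hFirr K t hθ hgen
  obtain ⟨D⟩ := exists_primeData (O := 𝓞 K) p hp
  have h1 : (D.S.filter (fun P => D.f P = 1)).card ≤ p := by
    by_cases h : (p:ℤ) ∣ a ∧ (p:ℤ) ∣ b
    · exact count_ram p hp5 D a b t (left_ne_zero_of_mul hab) (right_ne_zero_of_mul hab) hfr ht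
        hnorm h.1 h.2 hred
    · exact count_unram p hp5 D a b t hnorm h
  have hsum := D.sum
  rw [hfr] at hsum
  have hge : ∀ d, (D.S.filter (fun P => D.f P = d)).card * d ≤ 9 := by
    intro d
    rw [← hsum, ← smul_eq_mul, ← Finset.sum_const]
    refine le_trans (Finset.sum_le_sum (g := fun P => D.e P * D.f P) ?_)
      (Finset.sum_le_sum_of_subset (Finset.filter_subset _ _))
    intro P hP
    rw [Finset.mem_filter] at hP
    have := D.e_pos P hP.1
    rw [hP.2]
    nlinarith
  have hcard : ∀ d, (D.S.filter (fun P => D.f P = d)).card ≤ p := by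
    intro d
    rcases Nat.lt_or_ge d 2 with hd | hd
    · interval_cases d
      · rw [Finset.card_eq_zero.mpr]
        · omega
        · rw [Finset.filter_eq_empty_iff]
          intro P hP h
          have := D.f_pos P hP
          omega
      · exact h1
    · have := hge d
      nlinarith
  have hdist : ∀ P ∈ D.S, ∀ Q ∈ D.S, P ≠ Q → D.f P = D.f Q → D.f P < p := by
    intro P hP Q hQ hne hf
    have h2 : 2 ≤ (D.S.filter (fun R => D.f R = D.f P)).card := by
      rw [← Finset.card_pair hne]
      apply Finset.card_le_card
      intro R hR
      rw [Finset.mem_insert, Finset.mem_singleton] at hR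
      rw [Finset.mem_filter]
      rcases hR with rfl | rfl
      · exact ⟨hP, rfl⟩
      · exact ⟨hQ, hf.symm⟩
    have := hge (D.f P)
    nlinarith
  obtain ⟨η, hη⟩ := exists_eta p D hcard hdist
  exact ⟨η, index_lemma K p hp η hη⟩

theorem scaled_case (p : ℕ) (hp : p.Prime) (hp5 : 5 ≤ p)
    (K : Type*) [Field K] [NumberField K] (n : ℕ) :
    ∀ (a b : ℤ) (_ : b.natAbs ≤ n) (_ : a * b ≠ 0)
    (_ : Irreducible (X ^ 9 + C (a : ℚ) * X + C (b : ℚ))) (θ : K)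
    (_ : Polynomial.aeval θ (X ^ 9 + C (a : ℚ) * X + C (b : ℚ)) = 0)
    (_ : Algebra.adjoin ℚ {θ} = ⊤),
    ∃ η : 𝓞 K, Algebra.adjoin ℚ {(η : K)} = ⊤ ∧
      ¬ p ∣ (Algebra.adjoin ℤ {η} : Subalgebra ℤ (𝓞 K)).toSubring.toAddSubgroup.index := by
  induction n with
  | zero =>
    intro a b hb hab
    exact absurd (by simpa using hb) (right_ne_zero_of_mul hab)
  | succ n ih =>
    intro a b hb hab hFirr θ hθ hgen
    by_cases hred : ((p:ℤ)^8 ∣ a ∧ (p:ℤ)^9 ∣ b)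
    swap
    · exact reduced_case a b hab hFirr K θ hθ hgen p hp hp5 hred
    obtain ⟨⟨a', rfl⟩, ⟨b', rfl⟩⟩ := hred
    have hb' : b' ≠ 0 := by rintro rfl; simp at hab
    have ha' : a' ≠ 0 := by rintro rfl; simp at hab
    have hp0 : (p : K) ≠ 0 := by exact_mod_cast hp.ne_zero
    have hp0q : (p : ℚ) ≠ 0 := by exact_mod_cast hp.ne_zero
    have hθ1 : θ ^ 9 + (p : K) ^ 8 * (a' : K) * θ + (p : K) ^ 9 * (b' : K) = 0 := by
      simpa using hθ
    obtain ⟨t, rfl⟩ : ∃ t : K, θ = (p : K) * t := ⟨θ / p, by field_simp⟩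
    have ht : t ^ 9 + (a' : K) * t + (b' : K) = 0 := by
      have : (p : K) ^ 9 * (t ^ 9 + (a' : K) * t + (b' : K)) = 0 := by
        rw [← hθ1]; ring
      exact (mul_eq_zero.mp this).resolve_left (pow_ne_zero _ hp0)
    have ht' : Polynomial.aeval t (X ^ 9 + C (a' : ℚ) * X + C (b' : ℚ)) = 0 := by
      simpa using ht
    have hgen' : Algebra.adjoin ℚ {t} = ⊤ := by
      rw [eq_top_iff, ← hgen]
      apply Algebra.adjoin_le
      rw [Set.singleton_subset_iff]
      exact mul_mem (natCast_mem _ p) (Algebra.self_mem_adjoin_singleton ℚ t)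
    have hfr : Module.finrank ℚ K = 9 := by
      have hint : IsIntegral ℚ ((p : K) * t) := Algebra.IsIntegral.isIntegral _
      rw [(PowerBasis.ofAdjoinEqTop hint hgen).finrank, PowerBasis.ofAdjoinEqTop_dim,
        ← minpoly.eq_of_irreducible_of_monic hFirr hθ (by monicity!)]
      compute_degree!
    have hirr : Irreducible (X ^ 9 + C (a' : ℚ) * X + C (b' : ℚ)) := by
      have hint : IsIntegral ℚ t := Algebra.IsIntegral.isIntegral _
      have hd : (minpoly ℚ t).natDegree = 9 := by
        rw [← hfr, (PowerBasis.ofAdjoinEqTop hint hgen').finrank, PowerBasis.ofAdjoinEqTop_dim]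
      have hm : (X ^ 9 + C (a' : ℚ) * X + C (b' : ℚ)).Monic := by monicity!
      have hdeg : (X ^ 9 + C (a' : ℚ) * X + C (b' : ℚ)).natDegree = 9 := by compute_degree!
      have := Polynomial.eq_of_monic_of_dvd_of_natDegree_le (minpoly.monic hint) hm
        (minpoly.dvd ℚ t ht') (by rw [hd, hdeg])
      rw [this]
      exact minpoly.irreducible hint
    refine ih a' b' ?_ (mul_ne_zero ha' hb') hirr t ht' hgen'
    rw [Int.natAbs_mul, Int.natAbs_pow, Int.natAbs_natCast] at hb
    have h1 : 2 ≤ p ^ 9 := le_trans hp.two_le (Nat.le_self_pow (by norm_num) p)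
    have h2 : 1 ≤ b'.natAbs := Int.natAbs_pos.mpr hb'
    nlinarith

/-- A prime dividing the index `i(K)` of the degree-9 field defined by
`x^9 + a x + b` (i.e. dividing `(ℤ_K : ℤ[η])` for every generator `η`) is `2` or `3`. -/
theorem common_index_divisor_le_three (a b : ℤ) (hab : a * b ≠ 0)
    (hFirr : Irreducible (X ^ 9 + C (a : ℚ) * X + C (b : ℚ)))
    (K : Type*) [Field K] [NumberField K] (θ : K)
    (hθ : Polynomial.aeval θ (X ^ 9 + C (a : ℚ) * X + C (b : ℚ)) = 0)
    (hgen : Algebra.adjoin ℚ {θ} = ⊤)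
    (p : ℕ) (hp : p.Prime)
    (hdvd : ∀ η : 𝓞 K, Algebra.adjoin ℚ {(η : K)} = ⊤ →
        p ∣ (Algebra.adjoin ℤ {η} : Subalgebra ℤ (𝓞 K)).toSubring.toAddSubgroup.index) :
    p = 2 ∨ p = 3 := by
  by_contra hcon
  push Not at hcon
  have hp5 : 5 ≤ p := by
    have h2 := hp.two_le
    by_contra h
    have h4 : p = 4 := by omega
    rw [h4] at hp
    revert hp
    decide
  obtain ⟨η, h1, h2⟩ := scaled_case p hp hp5 K _ a b le_rfl hab hFirr θ hθ hgen
  exact h2 (hdvd η h1)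
end
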